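/- arXiv:math/0005217 — 6 statements merged into one kernel-verified Lean document; each statement's English description precedes it below -/
import Mathlib

section
/- For every integer k ≥ 0, the dimension of the complex vector space of level-one modular forms of weight k equals the number of pairs (a,b) of nonnegative integers with 4a + 6b = k. (This is the coefficient-wise form of Proposition 2(a): the generating function of the dimensions h⁰ of tensor powers of the universal cotangent line bundle on the moduli of 1-pointed genus-one stable curves is 1/((1−q⁴)(1−q⁶)), via the identification of sections of L₁^k with weight-k modular forms.) -/
/-!
In negative or odd weight both sides vanish. In even weight `k ≥ 0`, repeated division of cusp forms
by the discriminant shows that `M_k` has dimension `⌊k / 12⌋ + 1`, or `⌊k / 12⌋` if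
`k ≡ 2 mod 12`. On the other side, a pair with `4a + 6b = k` is determined by `b`, which ranges over
the integers `0 ≤ b ≤ k / 6` having the parity of `k / 2`.
-/

open scoped MatrixGroups

theorem finrank_modularForm_congr {Γ Γ' : Subgroup (GL (Fin 2) ℝ)} [Γ.HasDetOne] [Γ'.HasDetOne]
    (h : Γ = Γ') (k : ℤ) :
    Module.finrank ℂ (ModularForm Γ k) = Module.finrank ℂ (ModularForm Γ' k) := by
  subst h
  rfl

theorem count_mul_modEq_eq_card {b : ℕ} (hb : 0 < b) (a n : ℕ) :
    Nat.count (fun y ↦ b * y ≡ n [MOD a]) (n / b + 1) =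
      Nat.card {y : ℕ // b * y ≤ n ∧ b * y ≡ n [MOD a]} := by
  rw [Nat.count_eq_card_filter_range]
  refine (Nat.subtype_card _ fun y ↦ ?_).symm
  rw [Finset.mem_filter, Finset.mem_range, Nat.lt_succ_iff, Nat.le_div_iff_mul_le hb, mul_comm y]

theorem card_mul_add_mul_eq_count_modEq {a b : ℕ} (ha : 0 < a) (hb : 0 < b) (n : ℕ) :
    Nat.card {p : ℕ × ℕ // a * p.1 + b * p.2 = n} =
      Nat.count (fun y ↦ b * y ≡ n [MOD a]) (n / b + 1) := by
  have snd_mem (p : {p : ℕ × ℕ // a * p.1 + b * p.2 = n}) :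
      b * p.1.2 ≤ n ∧ b * p.1.2 ≡ n [MOD a] := by
    obtain ⟨⟨x, y⟩, rfl⟩ := p
    exact ⟨Nat.le_add_left _ _, by simp [Nat.ModEq]⟩
  rw [count_mul_modEq_eq_card hb]
  refine Nat.card_eq_of_bijective (fun p ↦ ⟨p.1.2, snd_mem p⟩) ⟨?injective, ?surjective⟩
  case injective =>
    rintro ⟨⟨x, y⟩, hxy⟩ ⟨⟨x', y'⟩, hxy'⟩ h
    obtain rfl : y = y' := congrArg Subtype.val h
    obtain rfl : x = x' := Nat.eq_of_mul_eq_mul_left ha (Nat.add_right_cancel (hxy.trans hxy'.symm))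
    rfl
  case surjective =>
    rintro ⟨y, hle, hmod⟩
    obtain ⟨x, hx⟩ := (Nat.modEq_iff_dvd' hle).1 hmod
    exact ⟨⟨(x, y), by rw [← hx, Nat.sub_add_cancel hle]⟩, rfl⟩

theorem card_four_mul_add_six_mul_eq_of_even {k : ℕ} (hk : Even k) :
    Nat.card {p : ℕ × ℕ // 4 * p.1 + 6 * p.2 = k} =
      if k ≡ 2 [MOD 12] then k / 12 else k / 12 + 1 := by
  have modEq_iff (y : ℕ) : 6 * y ≡ k [MOD 4] ↔ y ≡ k / 2 [MOD 2] := by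
    unfold Nat.ModEq
    grind
  calc Nat.card {p : ℕ × ℕ // 4 * p.1 + 6 * p.2 = k}
      = Nat.count (fun y ↦ y ≡ k / 2 [MOD 2]) (k / 6 + 1) := by
        simp only [card_mul_add_mul_eq_count_modEq four_pos (by norm_num : 0 < 6), modEq_iff]
    _ = (k / 6 + 1) / 2 + if k / 2 % 2 < (k / 6 + 1) % 2 then 1 else 0 :=
        Nat.count_modEq_card _ two_pos _
    _ = if k ≡ 2 [MOD 12] then k / 12 else k / 12 + 1 := by
        unfold Nat.ModEq
        grind

theorem finrank_levelOne_eq_card_of_even {k : ℕ} (hk : Even k) :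
    Module.finrank ℂ (ModularForm 𝒮ℒ k) =
      Nat.card {p : ℕ × ℕ // 4 * p.1 + 6 * p.2 = k} := by
  rw [card_four_mul_add_six_mul_eq_of_even hk]
  exact Module.finrank_eq_of_rank_eq (mod_cast ModularForm.dimension_level_one k hk)

theorem finrank_levelOne_eq_zero_of_neg_or_odd {k : ℤ} (hk : k < 0 ∨ Odd k) :
    Module.finrank ℂ (ModularForm 𝒮ℒ k) = 0 := by
  apply Module.finrank_eq_of_rank_eq
  exact_mod_cast hk.elim ModularForm.levelOne_neg_weight_rank_zero
    ModularForm.levelOne_odd_weight_rank_zero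

theorem card_four_mul_add_six_mul_eq_zero_of_neg_or_odd {k : ℤ} (hk : k < 0 ∨ Odd k) :
    Nat.card {p : ℕ × ℕ // 4 * (p.1 : ℤ) + 6 * (p.2 : ℤ) = k} = 0 := by
  have : IsEmpty {p : ℕ × ℕ // 4 * (p.1 : ℤ) + 6 * (p.2 : ℤ) = k} := ⟨by grind⟩
  exact Nat.card_of_isEmpty

theorem dim_modularForm_eq_card_general (k : ℤ) :
    Module.finrank ℂ (ModularForm (CongruenceSubgroup.Gamma 1) k) =
      Nat.card {p : ℕ × ℕ // 4 * (p.1 : ℤ) + 6 * (p.2 : ℤ) = k} := by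
  rw [finrank_modularForm_congr CongruenceSubgroup.Gamma_one_coe_eq_SL]
  by_cases hk : k < 0 ∨ Odd k
  · rw [finrank_levelOne_eq_zero_of_neg_or_odd hk,
      card_four_mul_add_six_mul_eq_zero_of_neg_or_odd hk]
  · obtain ⟨k_nonneg, k_even⟩ : 0 ≤ k ∧ Even k := by simpa using hk
    lift k to ℕ using k_nonneg
    exact_mod_cast finrank_levelOne_eq_card_of_even (mod_cast k_even)

/-- **Dimension of level-one modular forms of weight `k`** (Proposition 2(a), coefficientwise):
for every integer `k ≥ 0`, the dimension over `ℂ` of the space of modular forms of weight `k`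
for the full modular group `SL(2, ℤ)` equals the number of pairs `(a, b)` of nonnegative
integers with `4a + 6b = k`. -/
theorem dim_modularForm_eq_card (k : ℤ) (hk : 0 ≤ k) :
    Module.finrank ℂ (ModularForm (CongruenceSubgroup.Gamma 1) k) =
      Nat.card {p : ℕ × ℕ // 4 * (p.1 : ℤ) + 6 * (p.2 : ℤ) = k} :=
  dim_modularForm_eq_card_general k
end

section
/- For every integer k ≥ 0, the family of modular forms E₄^a · E₆^b, indexed by the pairs (a,b) of nonnegative integers with 4a + 6b = k, is a basis of the complex vector space M_k of level-one modular forms of weight k. In particular, the graded ring of level-one modular forms is the polynomial ring generated by the Eisenstein series E₄ and E₆ of weights 4 and 6, and E₄, E₆ are algebraically independent over ℂ. -/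
open scoped MatrixGroups

/-- Transport a modular form along an equality of weights. -/
def ModularForm.castWeight {Γ : Subgroup SL(2, ℤ)} {k k' : ℤ} (h : k = k')
    (f : ModularForm Γ k) : ModularForm Γ k' := h ▸ f

/-- The `n`-th power of a modular form of weight `k`, a modular form of weight `n * k`. -/
noncomputable def ModularForm.natPow {Γ : Subgroup SL(2, ℤ)} {k : ℤ}
    (f : ModularForm Γ k) : (n : ℕ) → ModularForm Γ (n * k)
  | 0 => ModularForm.castWeight (by simp) (1 : ModularForm Γ 0)
  | n + 1 => ModularForm.castWeight (by push_cast; ring) ((ModularForm.natPow f n).mul f)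

/-- The level-one Eisenstein series of weight 4. -/
noncomputable def E₄ : ModularForm (CongruenceSubgroup.Gamma 1) 4 :=
  ModularForm.eisensteinSeries_MF (by norm_num) (0 : Fin 2 → ZMod (1 : ℕ+))

/-- The level-one Eisenstein series of weight 6. -/
noncomputable def E₆ : ModularForm (CongruenceSubgroup.Gamma 1) 6 :=
  ModularForm.eisensteinSeries_MF (by norm_num) (0 : Fin 2 → ZMod (1 : ℕ+))

/-- The family `E₄^a · E₆^b`, indexed by pairs `(a, b)` of nonnegative integers with
`4a + 6b = k`, regarded as elements of the space of weight-`k` level-one modular forms. -/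
noncomputable def eisensteinMonomial (k : ℤ)
    (p : {p : ℕ × ℕ // 4 * (p.1 : ℤ) + 6 * (p.2 : ℤ) = k}) :
    ModularForm (CongruenceSubgroup.Gamma 1) k :=
  ModularForm.castWeight (by have h := p.2; omega)
    ((ModularForm.natPow E₄ p.1.1).mul (ModularForm.natPow E₆ p.1.2))

/-!
Subtracting a multiple of a monomial `E₄^a · E₆^b` of the same weight, whose constant term is
nonzero, makes a form of weight `k` cuspidal, hence `Δ` times a form of weight `k - 12`. Since `Δ`
is a combination of `E₄³` and `E₆²`, the monomials span by induction on `k`. By the dimension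
formula there are at most `dim M_k` of them, so they are also linearly independent.
-/

open UpperHalfPlane CongruenceSubgroup

section Coe

variable {Γ : Subgroup SL(2, ℤ)} {k : ℤ}

lemma coe_castWeight {k' : ℤ} (h : k = k') (f : ModularForm Γ k) :
    ⇑(ModularForm.castWeight h f) = ⇑f := by
  subst h
  rfl

lemma coe_natPow (f : ModularForm Γ k) (n : ℕ) : ⇑(ModularForm.natPow f n) = ⇑f ^ n := by
  induction n with
  | zero => exact coe_castWeight _ _
  | succ n ih => rw [ModularForm.natPow, coe_castWeight, ModularForm.coe_mul, ih, pow_succ]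

end Coe

section Normalization

lemma coe_eisensteinSeriesMF_one {k : ℕ} (hk : 3 ≤ k) :
    ⇑(ModularForm.eisensteinSeriesMF (N := 1) (k := k) (mod_cast hk) 0) =
      (2 : ℂ) • ⇑(ModularForm.E hk) := by
  have E_eq : ⇑(ModularForm.E hk) =
      (1 / 2 : ℂ) • ⇑(ModularForm.eisensteinSeriesMF (N := 1) (k := k) (mod_cast hk) 0) := rfl
  rw [E_eq, smul_smul, mul_one_div_cancel two_ne_zero, one_smul]

lemma coe_E₄ : ⇑E₄ = (2 : ℂ) • ⇑ModularForm.E₄ :=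
  coe_eisensteinSeriesMF_one (by norm_num : 3 ≤ 4)

lemma coe_E₆ : ⇑E₆ = (2 : ℂ) • ⇑ModularForm.E₆ :=
  coe_eisensteinSeriesMF_one (by norm_num : 3 ≤ 6)

-- The library's `E₄` and `E₆` have constant term `1`, those here have constant term `2`;
-- hence `13824 = 2 ^ 3 * 1728`.
lemma discriminant_eq_smul_E₄_cube_sub_E₆_sq :
    ModularForm.discriminant = (13824⁻¹ : ℂ) • (⇑E₄ ^ 3 - (2 : ℂ) • ⇑E₆ ^ 2) := by
  ext z
  simp only [ModularForm.discriminant_eq_E₄_cube_sub_E₆_sq, coe_E₄, coe_E₆, Pi.smul_apply,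
    Pi.sub_apply, Pi.pow_apply, smul_eq_mul]
  ring

lemma qExpansion_E₄_coeff_zero : (qExpansion 1 E₄).coeff 0 = 2 := by
  rw [coe_E₄, ModularForm.qExpansion_smul one_pos one_mem_strictPeriods_SL, PowerSeries.coeff_smul,
    EisensteinSeries.E_qExpansion_coeff_zero _ ⟨2, rfl⟩, smul_eq_mul, mul_one]

lemma qExpansion_E₆_coeff_zero : (qExpansion 1 E₆).coeff 0 = 2 := by
  rw [coe_E₆, ModularForm.qExpansion_smul one_pos one_mem_strictPeriods_SL, PowerSeries.coeff_smul,
    EisensteinSeries.E_qExpansion_coeff_zero _ ⟨3, rfl⟩, smul_eq_mul, mul_one]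

end Normalization

/-- The pairs `(a, b)` for which `E₄^a · E₆^b` has weight `k`: the index type of
`eisensteinMonomial k`. -/
abbrev EisensteinExponents (k : ℤ) : Type :=
  {p : ℕ × ℕ // 4 * (p.1 : ℤ) + 6 * (p.2 : ℤ) = k}

section Exponents

lemma nonempty_eisensteinExponents_iff {k : ℤ} :
    Nonempty (EisensteinExponents k) ↔ 0 ≤ k ∧ Even k ∧ k ≠ 2 := by
  constructor
  · rintro ⟨⟨a, b⟩, h⟩
    grind
  · rintro ⟨hk, ⟨m, rfl⟩, h2⟩
    obtain ⟨j, rfl | rfl⟩ := m.even_or_odd'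
    · exact ⟨⟨(j.toNat, 0), by dsimp only; omega⟩⟩
    · exact ⟨⟨((j - 1).toNat, 1), by dsimp only; omega⟩⟩

lemma exists_injective_eisensteinExponents_fin (n : ℕ) :
    ∃ φ : EisensteinExponents n → Fin (if n ≡ 2 [MOD 12] then n / 12 else n / 12 + 1),
      Function.Injective φ := by
  have half_lt (p : EisensteinExponents n) :
      p.1.2 / 2 < if n ≡ 2 [MOD 12] then n / 12 else n / 12 + 1 := by
    have := p.2
    split_ifs with hn <;> simp only [Nat.ModEq] at hn <;> omega
  -- The residue of `n` modulo `4` fixes the parity of `b`, so `⌊b / 2⌋` determines `(a, b)`.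
  refine ⟨fun p ↦ ⟨p.1.2 / 2, half_lt p⟩, ?_⟩
  rintro ⟨⟨a, b⟩, hp⟩ ⟨⟨a', b'⟩, hp'⟩ h
  simp only [Fin.mk.injEq, Subtype.mk.injEq, Prod.mk.injEq] at h hp hp' ⊢
  omega

end Exponents

section LevelOne

variable {k : ℤ}

/-- The identification, with the same underlying functions, of modular forms for `Γ(1)` with those
for `𝒮ℒ`, the level at which the library develops the level-one theory. -/
def gammaOneEquivLevelOne (k : ℤ) : ModularForm Γ(1) k ≃ₗ[ℂ] ModularForm 𝒮ℒ k where
  toFun f := f.mcast rfl Gamma_one_coe_eq_SL.symm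
  invFun f := f.mcast rfl Gamma_one_coe_eq_SL
  map_add' _ _ := rfl
  map_smul' _ _ := rfl

lemma finrank_modularForm_gamma_one {n : ℕ} (hn : Even n) :
    Module.finrank ℂ (ModularForm Γ(1) n) =
      if n ≡ 2 [MOD 12] then n / 12 else n / 12 + 1 := by
  rw [(gammaOneEquivLevelOne n).finrank_eq]
  exact Module.finrank_eq_of_rank_eq (mod_cast ModularForm.dimension_level_one n hn)

lemma levelOne_eq_zero_of_isEmpty_eisensteinExponents [IsEmpty (EisensteinExponents k)]
    (f : ModularForm 𝒮ℒ k) : f = 0 := by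
  have h : ¬(0 ≤ k ∧ Even k ∧ k ≠ 2) := by
    rwa [← nonempty_eisensteinExponents_iff, not_nonempty_iff]
  rcases lt_or_ge k 0 with hneg | hk
  · exact rank_zero_iff_forall_zero.mp (ModularForm.levelOne_neg_weight_rank_zero hneg) f
  rcases k.even_or_odd with heven | hodd
  · obtain rfl : k = 2 := by tauto
    exact rank_zero_iff_forall_zero.mp ModularForm.levelOne_weight_two_rank_zero f
  · exact ModularForm.levelOne_odd_weight_eq_zero hodd f

lemma exists_eq_smul_add_discriminant_mul (f : ModularForm 𝒮ℒ k) {g : ModularForm 𝒮ℒ k}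
    (hg : (qExpansion 1 g).coeff 0 ≠ 0) :
    ∃ (c : ℂ) (h : ModularForm 𝒮ℒ (k - 12)), ⇑f = c • ⇑g + ModularForm.discriminant * ⇑h := by
  set c : ℂ := (qExpansion 1 f).coeff 0 / (qExpansion 1 g).coeff 0
  have hcusp : (qExpansion 1 (f - c • g)).coeff 0 = 0 := by
    rw [← FunLike.coe_smul, ModularForm.qExpansion_sub one_pos one_mem_strictPeriods_SL,
      FunLike.coe_smul, ModularForm.qExpansion_smul one_pos one_mem_strictPeriods_SL, map_sub,
      PowerSeries.coeff_smul, smul_eq_mul, div_mul_cancel₀ _ hg, sub_self]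
  refine ⟨c, CuspForm.discriminantEquiv (ModularForm.toCuspForm (f - c • g) hcusp), ?_⟩
  rw [ModularForm.discriminant_mul_discriminantEquiv]
  exact (add_sub_cancel _ _).symm

end LevelOne

section Monomials

variable {k : ℤ}

lemma coe_eisensteinMonomial (p : EisensteinExponents k) :
    ⇑(eisensteinMonomial k p) = ⇑E₄ ^ p.1.1 * ⇑E₆ ^ p.1.2 := by
  rw [eisensteinMonomial, coe_castWeight, ModularForm.coe_mul, coe_natPow, coe_natPow]

lemma qExpansion_eisensteinMonomial_coeff_zero (p : EisensteinExponents k) :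
    (qExpansion 1 (eisensteinMonomial k p)).coeff 0 = 2 ^ p.1.1 * 2 ^ p.1.2 := by
  have hΓ : (1 : ℝ) ∈ (Γ(1) : Subgroup (GL (Fin 2) ℝ)).strictPeriods :=
    Gamma_one_coe_eq_SL ▸ one_mem_strictPeriods_SL
  rw [coe_eisensteinMonomial, ← ModularForm.coe_pow, ← ModularForm.coe_pow,
    ModularForm.qExpansion_mul_coe one_pos hΓ,
    ModularForm.qExpansion_pow one_pos hΓ, ModularForm.qExpansion_pow one_pos hΓ]
  simp only [PowerSeries.coeff_zero_eq_constantCoeff, map_mul, map_pow,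
    ← PowerSeries.coeff_zero_eq_constantCoeff_apply,
    qExpansion_E₄_coeff_zero, qExpansion_E₆_coeff_zero]

/-- The span of the monomials `E₄^a · E₆^b` of weight `k`, taken among functions on the upper
half-plane so that multiplication by `Δ` involves no transport between weights or levels. -/
noncomputable def eisensteinMonomialSpan (k : ℤ) : Submodule ℂ (ℍ → ℂ) :=
  Submodule.span ℂ (Set.range fun p ↦ ⇑(eisensteinMonomial k p))

lemma E₄_pow_mul_E₆_pow_mem_eisensteinMonomialSpan {a b : ℕ} (h : 4 * (a : ℤ) + 6 * (b : ℤ) = k) :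
    ⇑E₄ ^ a * ⇑E₆ ^ b ∈ eisensteinMonomialSpan k :=
  Submodule.subset_span ⟨⟨(a, b), h⟩, coe_eisensteinMonomial _⟩

lemma discriminant_mul_mem_eisensteinMonomialSpan {g : ℍ → ℂ}
    (hg : g ∈ eisensteinMonomialSpan (k - 12)) :
    ModularForm.discriminant * g ∈ eisensteinMonomialSpan k := by
  suffices (eisensteinMonomialSpan (k - 12)).map
      (LinearMap.mulLeft ℂ ModularForm.discriminant) ≤ eisensteinMonomialSpan k from
    this (Submodule.mem_map_of_mem hg)
  rw [eisensteinMonomialSpan, Submodule.map_span_le]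
  rintro _ ⟨⟨⟨a, b⟩, hab⟩, rfl⟩
  have expand : ModularForm.discriminant * (⇑E₄ ^ a * ⇑E₆ ^ b) =
      (13824⁻¹ : ℂ) • (⇑E₄ ^ (a + 3) * ⇑E₆ ^ b - (2 : ℂ) • (⇑E₄ ^ a * ⇑E₆ ^ (b + 2))) := by
    rw [discriminant_eq_smul_E₄_cube_sub_E₆_sq, smul_mul_assoc, sub_mul, smul_mul_assoc]
    ring_nf
  change ModularForm.discriminant * ⇑(eisensteinMonomial (k - 12) ⟨(a, b), hab⟩) ∈ _
  rw [coe_eisensteinMonomial, expand]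
  refine Submodule.smul_mem _ _ (Submodule.sub_mem _ ?_ (Submodule.smul_mem _ _ ?_)) <;>
    exact E₄_pow_mul_E₆_pow_mem_eisensteinMonomialSpan (by push_cast; linarith)

lemma levelOne_mem_eisensteinMonomialSpan {k : ℤ} (f : ModularForm 𝒮ℒ k) :
    ⇑f ∈ eisensteinMonomialSpan k := by
  rcases isEmpty_or_nonempty (EisensteinExponents k) with _ | ⟨⟨p⟩⟩
  · rw [levelOne_eq_zero_of_isEmpty_eisensteinExponents f]
    exact Submodule.zero_mem _
  have : 0 ≤ k := (nonempty_eisensteinExponents_iff.mp ⟨p⟩).1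
  let g : ModularForm 𝒮ℒ k := gammaOneEquivLevelOne k (eisensteinMonomial k p)
  have hg : (qExpansion 1 g).coeff 0 ≠ 0 :=
    (qExpansion_eisensteinMonomial_coeff_zero p).trans_ne (by simp)
  obtain ⟨c, h, hf⟩ := exists_eq_smul_add_discriminant_mul f hg
  rw [hf]
  exact Submodule.add_mem _ (Submodule.smul_mem _ _ (Submodule.subset_span ⟨p, rfl⟩))
    (discriminant_mul_mem_eisensteinMonomialSpan (levelOne_mem_eisensteinMonomialSpan h))
-- The shift by `12` lets the recursion end in a negative weight.
termination_by (k + 12).toNat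

theorem span_range_eisensteinMonomial (k : ℤ) :
    Submodule.span ℂ (Set.range (eisensteinMonomial k)) = ⊤ := by
  let coeₗ : ModularForm Γ(1) k →ₗ[ℂ] ℍ → ℂ :=
    { toFun := (⇑), map_add' := fun _ _ ↦ rfl, map_smul' := fun _ _ ↦ rfl }
  have map_span : (Submodule.span ℂ (Set.range (eisensteinMonomial k))).map coeₗ =
      eisensteinMonomialSpan k := by
    rw [Submodule.map_span, ← Set.range_comp]
    rfl
  refine Submodule.eq_top_iff'.mpr fun f ↦ ?_
  obtain ⟨g, hg, hgf⟩ :=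
    map_span.ge (levelOne_mem_eisensteinMonomialSpan (gammaOneEquivLevelOne k f))
  obtain rfl : g = f := DFunLike.coe_injective hgf
  exact hg

theorem linearIndependent_eisensteinMonomial (k : ℤ) :
    LinearIndependent ℂ (eisensteinMonomial k) := by
  rcases isEmpty_or_nonempty (EisensteinExponents k) with _ | hne
  · exact linearIndependent_empty_type
  obtain ⟨hk, heven, -⟩ := nonempty_eisensteinExponents_iff.mp hne
  lift k to ℕ using hk
  obtain ⟨φ, hφ⟩ := exists_injective_eisensteinExponents_fin k
  have := Finite.of_injective φ hφ
  have := Fintype.ofFinite (EisensteinExponents k)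
  refine linearIndependent_of_top_le_span_of_card_le_finrank
    (span_range_eisensteinMonomial k).ge ?_
  rw [finrank_modularForm_gamma_one (mod_cast heven)]
  simpa only [Fintype.card_fin] using Fintype.card_le_of_injective φ hφ

end Monomials

/-- **Monomials in `E₄`, `E₆` form a basis** (Proposition 2(a)): for every integer `k ≥ 0`,
the family of modular forms `E₄^a · E₆^b`, indexed by pairs `(a, b) ∈ ℕ × ℕ` with
`4a + 6b = k`, is a basis (linearly independent and spanning) of the complex vector space
of level-one modular forms of weight `k`. -/
theorem eisensteinMonomial_linearIndependent_and_span (k : ℤ) (hk : 0 ≤ k) :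
    LinearIndependent ℂ (eisensteinMonomial k) ∧
      Submodule.span ℂ (Set.range (eisensteinMonomial k)) = ⊤ := by
  exact ⟨linearIndependent_eisensteinMonomial k, span_range_eisensteinMonomial k⟩
end

section
/- Define c : ℤ → ℤ by c(k) = #{(a,b) ∈ ℕ×ℕ : 4a + 6b = k} for k ≥ 0, and c(k) = −#{(a,b) ∈ ℕ×ℕ : 4a + 6b = −k − 10} for k < 0. Then the formal power series F(q,r) := ∑_{a,b ≥ 0} c(b − a) q^a r^b in ℤ⟦q,r⟧ satisfies F(q,r) · (1 − qr)(1 − q⁴)(1 − q⁶)(1 − r⁴)(1 − r⁶) = (1 − q⁴)(1 − q⁶) − q^{10} (1 − r⁴)(1 − r⁶); equivalently F(q,r) = (1/(1−qr)) · ( 1/((1−r⁴)(1−r⁶)) − q^{10}/((1−q⁴)(1−q⁶)) ). (This is the combinatorial form of the Corollary computing χ(M̄_{1,1}, 1/((1−q L₁^{−1})(1−q₁ L₁))), where c(k) = χ(M̄_{1,1}, L₁^{⊗k}).) -/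
open MvPowerSeries

/-!
The coefficient of `qᵃ rᵇ` in `F` depends only on `b - a`, so multiplying `F` by `1 - qr` cancels
everything off the two coordinate axes: what remains is a series in `r`, recording `c` on the
nonnegative integers, and a series in `q`, recording `c` on the negative ones. The number of
representations `4a + 6b = k` has generating function `P(X) = 1 / ((1 - X⁴)(1 - X⁶))`, a product of
two geometric series, so the two remaining series are `P(r)` and `-q¹⁰ P(q)`, where `q¹⁰` accounts
for the shift by `10` in the definition of `c`.
-/

open Finset
open scoped PowerSeries

section LinearRepCount

/-- The number of representations of an integer `k` as `d * a + e * b` with `a b : ℕ`. The argument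
`k` is an integer so that the count makes sense, and vanishes, for negative `k`. If `d` or `e` is
zero there may be infinitely many representations, and then `Nat.card` returns `0`. -/
noncomputable def linearRepCount (d e : ℕ) (k : ℤ) : ℕ :=
  Nat.card {p : ℕ × ℕ // (d : ℤ) * p.1 + e * p.2 = k}

variable {R : Type*} [CommRing R] {d e : ℕ}

lemma linearRepCount_of_neg {k : ℤ} (hk : k < 0) : linearRepCount d e k = 0 := by
  have : IsEmpty {p : ℕ × ℕ // (d : ℤ) * p.1 + e * p.2 = k} :=
    ⟨fun ⟨p, hp⟩ ↦ hk.not_ge (hp ▸ by positivity)⟩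
  exact Nat.card_of_isEmpty

lemma linearRepCount_natCast_eq_card (hd : d ≠ 0) (he : e ≠ 0) (n : ℕ) :
    linearRepCount d e n = #{x ∈ antidiagonal n | d ∣ x.1 ∧ e ∣ x.2} := by
  let f (p : {p : ℕ × ℕ // (d : ℤ) * p.1 + e * p.2 = n}) :
      {x ∈ antidiagonal n | d ∣ x.1 ∧ e ∣ x.2} :=
    ⟨(d * p.1.1, e * p.1.2), by simpa using mod_cast p.2⟩
  rw [linearRepCount, ← Nat.card_eq_finsetCard]
  refine Nat.card_eq_of_bijective f ⟨?_, ?_⟩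
  · rintro ⟨⟨a, b⟩, _⟩ ⟨⟨a', b'⟩, _⟩ h
    simpa [f, hd, he] using h
  · rintro ⟨⟨_, _⟩, hx⟩
    obtain ⟨hn, ⟨a, rfl⟩, ⟨b, rfl⟩⟩ := by simpa using hx
    exact ⟨⟨(a, b), mod_cast hn⟩, rfl⟩

lemma expand_mk_one_mul_one_sub_X_pow (hd : d ≠ 0) :
    PowerSeries.expand d hd (PowerSeries.mk 1 : R⟦X⟧) * (1 - PowerSeries.X ^ d) = 1 := by
  simpa using congrArg (PowerSeries.expand d hd) (PowerSeries.mk_one_mul_one_sub_eq_one R)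

lemma mk_linearRepCount_eq_expand_mul_expand (hd : d ≠ 0) (he : e ≠ 0) :
    (PowerSeries.mk fun n ↦ (linearRepCount d e n : R)) =
      PowerSeries.expand d hd (PowerSeries.mk 1) * PowerSeries.expand e he (PowerSeries.mk 1) := by
  ext n
  simp [PowerSeries.coeff_mul, PowerSeries.coeff_expand, linearRepCount_natCast_eq_card hd he,
    ← ite_and, and_comm]

lemma mk_linearRepCount_mul (hd : d ≠ 0) (he : e ≠ 0) :
    (PowerSeries.mk fun n ↦ (linearRepCount d e n : R)) *
      ((1 - PowerSeries.X ^ d) * (1 - PowerSeries.X ^ e)) = 1 := by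
  rw [mk_linearRepCount_eq_expand_mul_expand hd he, mul_mul_mul_comm,
    expand_mk_one_mul_one_sub_X_pow, expand_mk_one_mul_one_sub_X_pow, one_mul]

lemma subst_X_mk_linearRepCount_mul {σ : Type*} (hd : d ≠ 0) (he : e ≠ 0) (i : σ) :
    (PowerSeries.mk fun n ↦ (linearRepCount d e n : R)).subst (X i : MvPowerSeries σ R) *
      ((1 - X i ^ d) * (1 - X i ^ e)) = 1 := by
  have hX := PowerSeries.HasSubst.X (S := R) i
  simpa only [map_mul, map_sub, map_pow, map_one, PowerSeries.substAlgHom_X,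
    PowerSeries.coe_substAlgHom] using
    congrArg (PowerSeries.substAlgHom (R := R) hX) (mk_linearRepCount_mul hd he)

end LinearRepCount

section ToeplitzSeries

variable {R : Type*} [Semiring R]

/-- The bivariate series `∑ c (b - a) qᵃ rᵇ`, with `q = X 0` and `r = X 1`; its array of
coefficients is the Toeplitz matrix of `c`. -/
def toeplitzSeries (c : ℤ → R) : MvPowerSeries (Fin 2) R :=
  fun n ↦ c (n 1 - n 0)

lemma coeff_toeplitzSeries (c : ℤ → R) (n : Fin 2 →₀ ℕ) :
    coeff n (toeplitzSeries c) = c (n 1 - n 0) :=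
  rfl

lemma eq_toeplitzSeries {c : ℤ → R} {F : MvPowerSeries (Fin 2) R}
    (hF : ∀ a b : ℕ, coeff (Finsupp.single 0 a + Finsupp.single 1 b) F = c (b - a)) :
    F = toeplitzSeries c := by
  ext n
  have hn : Finsupp.single 0 (n 0) + Finsupp.single 1 (n 1) = n := by
    simp [Finsupp.ext_iff, Fin.forall_fin_two]
  rw [coeff_toeplitzSeries, ← hF, hn]

lemma coeff_toeplitzSeries_mul_X_mul_X (c : ℤ → R) (n : Fin 2 →₀ ℕ) :
    coeff n (toeplitzSeries c * (X 0 * X 1)) =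
      if n 0 = 0 ∨ n 1 = 0 then 0 else c (n 1 - n 0) := by
  have hle : Finsupp.single 0 1 + Finsupp.single 1 1 ≤ n ↔ ¬(n 0 = 0 ∨ n 1 = 0) := by
    simp [Finsupp.le_def, Fin.forall_fin_two, Nat.one_le_iff_ne_zero]
  rw [X, X, monomial_mul_monomial, coeff_mul_monomial, coeff_toeplitzSeries]
  simp only [hle, ite_not]
  split_ifs with h
  · rfl
  · have h0 : 1 ≤ n 0 := by omega
    have h1 : 1 ≤ n 1 := by omega
    simp [Nat.cast_sub h0, Nat.cast_sub h1]

end ToeplitzSeries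

lemma mk_neg_eq_C_sub_X_pow_mul_mk {R : Type*} [Ring R] {s : ℕ} (hs : s ≠ 0) {c f : ℤ → R}
    (hf : ∀ k < 0, f k = 0) (hc : ∀ k < 0, c k = -f (-k - s)) :
    (PowerSeries.mk fun n ↦ c (-n)) =
      PowerSeries.C (c 0) - PowerSeries.X ^ s * PowerSeries.mk fun n ↦ f n := by
  ext n
  rcases n.eq_zero_or_pos with rfl | hn
  · simp [hs]
  · rw [PowerSeries.coeff_mk, hc _ (by simpa using hn)]
    simp only [map_sub, PowerSeries.coeff_C, hn.ne', if_false, PowerSeries.coeff_X_pow_mul',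
      PowerSeries.coeff_mk, neg_neg, zero_sub]
    split_ifs with h
    · rw [Nat.cast_sub h]
    · rw [hf _ (by omega)]

section AxisSeries

variable {R : Type*} [CommRing R]

lemma toeplitzSeries_mul_one_sub (c : ℤ → R) :
    toeplitzSeries c * (1 - X 0 * X 1) =
      (PowerSeries.mk fun n ↦ c n).subst (X 1 : MvPowerSeries (Fin 2) R) +
        (PowerSeries.mk fun n ↦ c (-n)).subst (X 0 : MvPowerSeries (Fin 2) R) - C (c 0) := by
  ext n
  simp only [mul_sub, mul_one, map_sub, map_add, coeff_toeplitzSeries_mul_X_mul_X,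
    coeff_toeplitzSeries, PowerSeries.coeff_subst_single, coeff_C, PowerSeries.coeff_mk,
    Finsupp.ext_iff, Fin.forall_fin_two]
  rcases eq_or_ne (n 0) 0 with h0 | h0 <;> rcases eq_or_ne (n 1) 0 with h1 | h1 <;>
    simp [h0, h1]

lemma toeplitzSeries_mul_one_sub_of_antisymm {s : ℕ} (hs : s ≠ 0) {c f : ℤ → R}
    (hf : ∀ k < 0, f k = 0) (hc_nonneg : ∀ k, 0 ≤ k → c k = f k)
    (hc_neg : ∀ k < 0, c k = -f (-k - s)) :
    toeplitzSeries c * (1 - X 0 * X 1) =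
      (PowerSeries.mk fun n ↦ f n).subst (X 1 : MvPowerSeries (Fin 2) R) -
        X 0 ^ s * (PowerSeries.mk fun n ↦ f n).subst (X 0 : MvPowerSeries (Fin 2) R) := by
  have hpos : (PowerSeries.mk fun n ↦ c n) = PowerSeries.mk fun n ↦ f n := by
    ext n
    simp [hc_nonneg]
  have hX := PowerSeries.HasSubst.X (S := R) (0 : Fin 2)
  rw [toeplitzSeries_mul_one_sub, hpos, mk_neg_eq_C_sub_X_pow_mul_mk hs hf hc_neg,
    PowerSeries.subst_sub hX, PowerSeries.subst_mul hX, PowerSeries.subst_pow hX,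
    PowerSeries.subst_X hX, PowerSeries.subst_C]
  ring

end AxisSeries

theorem corollary_combinatorial_general {R : Type*} [CommRing R] {d e s : ℕ} (hd : d ≠ 0)
    (he : e ≠ 0) (hs : s ≠ 0) (c : ℤ → R)
    (hc_nonneg : ∀ k : ℤ, 0 ≤ k → c k = linearRepCount d e k)
    (hc_neg : ∀ k : ℤ, k < 0 → c k = -(linearRepCount d e (-k - s) : R))
    (F : MvPowerSeries (Fin 2) R)
    (hF : ∀ a b : ℕ, coeff (Finsupp.single 0 a + Finsupp.single 1 b) F = c ((b : ℤ) - a)) :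
    F * ((1 - X 0 * X 1) * ((1 - X 0 ^ d) * ((1 - X 0 ^ e) *
        ((1 - X 1 ^ d) * (1 - X 1 ^ e))))) =
      (1 - X 0 ^ d) * (1 - X 0 ^ e) - X 0 ^ s * ((1 - X 1 ^ d) * (1 - X 1 ^ e)) := by
  have hF' := toeplitzSeries_mul_one_sub_of_antisymm (f := fun k ↦ (linearRepCount d e k : R)) hs
    (fun k hk ↦ by simp [linearRepCount_of_neg hk]) hc_nonneg hc_neg
  rw [← eq_toeplitzSeries hF] at hF'
  have hq := subst_X_mk_linearRepCount_mul (R := R) hd he (0 : Fin 2)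
  have hr := subst_X_mk_linearRepCount_mul (R := R) hd he (1 : Fin 2)
  linear_combination
    (1 - X 0 ^ d) * (1 - X 0 ^ e) * ((1 - X 1 ^ d) * (1 - X 1 ^ e)) * hF' +
      (1 - X 0 ^ d) * (1 - X 0 ^ e) * hr - X 0 ^ s * ((1 - X 1 ^ d) * (1 - X 1 ^ e)) * hq

/-- **Corollary (combinatorial form)**: let `c k` be the number of pairs `(a,b) ∈ ℕ × ℕ` with
`4a + 6b = k` for `k ≥ 0`, and `c k = -#{(a,b) : 4a + 6b = -k - 10}` for `k < 0`.  If
`F = ∑_{a,b ≥ 0} c (b - a) qᵃ rᵇ` in `ℤ⟦q,r⟧` (with `q = X 0`, `r = X 1`), then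
`F · (1 − qr)(1 − q⁴)(1 − q⁶)(1 − r⁴)(1 − r⁶) = (1 − q⁴)(1 − q⁶) − q¹⁰ (1 − r⁴)(1 − r⁶)`,
i.e. `F = (1/(1−qr)) · (1/((1−r⁴)(1−r⁶)) − q¹⁰/((1−q⁴)(1−q⁶)))`. -/
theorem corollary_combinatorial (c : ℤ → ℤ)
    (hc_nonneg : ∀ k : ℤ, 0 ≤ k →
      c k = Nat.card {p : ℕ × ℕ // 4 * (p.1 : ℤ) + 6 * (p.2 : ℤ) = k})
    (hc_neg : ∀ k : ℤ, k < 0 →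
      c k = -(Nat.card {p : ℕ × ℕ // 4 * (p.1 : ℤ) + 6 * (p.2 : ℤ) = -k - 10} : ℤ))
    (F : MvPowerSeries (Fin 2) ℤ)
    (hF : ∀ a b : ℕ,
      MvPowerSeries.coeff (R := ℤ) (Finsupp.single 0 a + Finsupp.single 1 b) F = c ((b : ℤ) - a)) :
    F * ((1 - X 0 * X 1) * ((1 - X 0 ^ 4) * ((1 - X 0 ^ 6) *
        ((1 - X 1 ^ 4) * (1 - X 1 ^ 6))))) =
      (1 - X 0 ^ 4) * (1 - X 0 ^ 6) - X 0 ^ 10 * ((1 - X 1 ^ 4) * (1 - X 1 ^ 6)) := by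
  exact corollary_combinatorial_general (d := 4) (e := 6) (s := 10) (by simp) (by simp) (by simp) c
    hc_nonneg hc_neg F hF
end

section
/- In the ring of formal power series over ℚ in the variables q, q₁, q₂, the series Φ₂ := (q₁ q₂ / ((1−q₁)(1−q₂))) · [ 1/(24(1−q)(1−q₁)(1−q₂)) + (1/((1+q)(1+q₁)(1+q₂))) · ( 3/8 + (1/4)( q/(1+q) − q₁/(1+q₁) − q₂/(1+q₂) ) ) + (1 − q + q₁ + q₂ + q q₁ + q q₂ − q₁ q₂ + q q₁ q₂) / (4(1+q²)(1+q₁²)(1+q₂²)) + (1 − q + 2q₁ + 2q₂ + q q₁ + q q₂ + q₁ q₂ − q q₁ q₂) / (3(1+q+q²)(1+q₁+q₁²)(1+q₂+q₂²)) ] has all of its coefficients in ℤ. (This is the integrality, asserted in the paper, of the generating function of Proposition 3 for n = 2: the sum of the main contribution and the orbifold contribution Σ₂ computes integer Euler characteristics on M̄_{1,2}.) -/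
open MvPowerSeries

/-!
Up to an integral prefactor, `24 Φ₂ = M + 3 T₂ + 6 T₄ + 8 T₃`, where `M` is the main term and `Tₖ`
collects the contributions of the `k`-th cyclotomic denominators. The right-hand side is
`3 (3 M + T₂ + 2 T₄) + 8 (T₃ - M)`, so one needs `3 ∣ T₃ - M` and `8 ∣ 3 M + T₂ + 2 T₄`.

Modulo `3`, the first holds because `1 + x + x² ≡ (1 - x)²` turns `M` into `T₃`. For the second,
`M + ∏ (1 + xᵢ)⁻¹` is twice an even part, which leaves a divisibility by `4`. Expressing all
inverses through `dᵢ = (1 - xᵢ²)⁻¹` and `nᵢ = xᵢ² (1 - xᵢ⁴)⁻¹`, the `nᵢ` enter only through `2 nᵢ`;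
the part free of `nᵢ` is visibly a multiple of `4`, and the parts linear in `nᵢ` cancel modulo `4`
because the numerator of `T₄` is congruent to `(1 - x) (1 - y) (1 - z)` modulo `2`.
-/

open scoped Ring

section Inverse

theorem ringInverse_eq_mul_of_mul_eq {M : Type*} [CommMonoidWithZero M] {a b c : M}
    (habc : a * b = c) (hc : IsUnit c) : a⁻¹ʳ = b * c⁻¹ʳ := by
  have ha : IsUnit a := isUnit_of_dvd_unit ⟨b, habc.symm⟩ hc
  rw [← mul_one a⁻¹ʳ, ← Ring.mul_inverse_cancel c hc, ← habc, mul_assoc,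
    Ring.inverse_mul_cancel_left _ _ ha]

theorem map_ringInverse {M N F : Type*} [MonoidWithZero M] [MonoidWithZero N] [FunLike F M N]
    [MonoidHomClass F M N] (f : F) {a : M} (ha : IsUnit a) : f a⁻¹ʳ = (f a)⁻¹ʳ := by
  rw [← mul_one (f a)⁻¹ʳ, eq_comm, Ring.inverse_mul_eq_iff_eq_mul _ _ _ (ha.map f), ← map_mul,
    Ring.mul_inverse_cancel _ ha, map_one]

end Inverse

section CommRing

variable {R : Type*} [CommRing R]

/-- The main contribution to `Φ₂` in the variables `(q, q₁, q₂) = (x, y, z)`, scaled by `24` and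
without the prefactor `q₁ q₂ / ((1 - q₁) (1 - q₂))`. -/
noncomputable def mainTerm (x y z : R) : R :=
  ((1 - x) * ((1 - y) * (1 - z)))⁻¹ʳ

/-- The part of the orbifold contribution with denominators `1 + q`, `1 + q₁`, `1 + q₂`, scaled
by `8`. -/
noncomputable def orderTwoTerm (x y z : R) : R :=
  ((1 + x) * ((1 + y) * (1 + z)))⁻¹ʳ *
    (3 + 2 * (x * (1 + x)⁻¹ʳ - y * (1 + y)⁻¹ʳ - z * (1 + z)⁻¹ʳ))

/-- The part of the orbifold contribution with denominators `1 + q + q²`, `1 + q₁ + q₁²`,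
`1 + q₂ + q₂²`, scaled by `3`. -/
noncomputable def orderThreeTerm (x y z : R) : R :=
  (1 - x + 2 * y + 2 * z + x * y + x * z + y * z - x * y * z) *
    ((1 + x + x ^ 2) * ((1 + y + y ^ 2) * (1 + z + z ^ 2)))⁻¹ʳ

/-- The part of the orbifold contribution with denominators `1 + q²`, `1 + q₁²`, `1 + q₂²`, scaled
by `4`. -/
noncomputable def orderFourTerm (x y z : R) : R :=
  (1 - x + y + z + x * y + x * z - y * z + x * y * z) *
    ((1 + x ^ 2) * ((1 + y ^ 2) * (1 + z ^ 2)))⁻¹ʳ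

variable {x y z : R}

theorem three_dvd_ringInverse_one_sub_sub (hx : IsUnit (1 - x ^ 3)) :
    3 ∣ (1 - x)⁻¹ʳ - (1 - x) * (1 + x + x ^ 2)⁻¹ʳ := by
  rw [ringInverse_eq_mul_of_mul_eq (a := 1 - x) (b := 1 + x + x ^ 2) (by ring) hx,
    ringInverse_eq_mul_of_mul_eq (a := 1 + x + x ^ 2) (b := 1 - x) (by ring) hx]
  exact ⟨x * (1 - x ^ 3)⁻¹ʳ, by ring⟩

theorem three_dvd_orderThreeTerm_sub_mainTerm (hx : IsUnit (1 - x ^ 3))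
    (hy : IsUnit (1 - y ^ 3)) (hz : IsUnit (1 - z ^ 3)) :
    3 ∣ orderThreeTerm x y z - mainTerm x y z := by
  obtain ⟨k, hk⟩ := dvd_mul_sub_mul (three_dvd_ringInverse_one_sub_sub hx)
    (dvd_mul_sub_mul (three_dvd_ringInverse_one_sub_sub hy)
      (three_dvd_ringInverse_one_sub_sub hz))
  -- The numerator of `orderThreeTerm` is `(1 - x) (1 - y) (1 - z) + 3 (y + z)`.
  refine ⟨(y + z) * ((1 + x + x ^ 2) * ((1 + y + y ^ 2) * (1 + z + z ^ 2)))⁻¹ʳ - k, ?_⟩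
  simp only [orderThreeTerm, mainTerm, Ring.mul_inverse_rev]
  linear_combination -hk

theorem ringInverse_one_add (hx : IsUnit (1 - x ^ 2)) :
    (1 + x)⁻¹ʳ = (1 - x) * (1 - x ^ 2)⁻¹ʳ :=
  ringInverse_eq_mul_of_mul_eq (by ring) hx

theorem ringInverse_one_sub (hx : IsUnit (1 - x ^ 2)) :
    (1 - x)⁻¹ʳ = (1 + x) * (1 - x ^ 2)⁻¹ʳ :=
  ringInverse_eq_mul_of_mul_eq (by ring) hx

theorem ringInverse_one_add_sq (hx : IsUnit (1 - x ^ 4)) :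
    (1 + x ^ 2)⁻¹ʳ = (1 - x ^ 2)⁻¹ʳ - 2 * (x ^ 2 * (1 - x ^ 4)⁻¹ʳ) := by
  rw [ringInverse_eq_mul_of_mul_eq (a := 1 + x ^ 2) (b := 1 - x ^ 2) (by ring) hx,
    ringInverse_eq_mul_of_mul_eq (a := 1 - x ^ 2) (b := 1 + x ^ 2) (by ring) hx]
  ring

theorem mul_sq_ringInverse_one_add (hx : IsUnit (1 - x ^ 4)) :
    x * (1 + x)⁻¹ʳ ^ 2 = x * (1 - x ^ 2)⁻¹ʳ + 2 * (1 - x) * (x ^ 2 * (1 - x ^ 4)⁻¹ʳ) -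
      4 * ((1 + x)⁻¹ʳ * (x ^ 2 * (1 - x ^ 4)⁻¹ʳ)) := by
  rw [ringInverse_eq_mul_of_mul_eq (a := 1 + x) (b := (1 - x) * (1 + x ^ 2)) (by ring) hx,
    ringInverse_eq_mul_of_mul_eq (a := 1 - x ^ 2) (b := 1 + x ^ 2) (by ring) hx]
  linear_combination ((x + 2 * x ^ 2 - x ^ 3) * (1 - x ^ 4)⁻¹ʳ) * Ring.mul_inverse_cancel _ hx

theorem mainTerm_add_prod_ringInverse_one_add (hx : IsUnit (1 - x ^ 2))
    (hy : IsUnit (1 - y ^ 2)) (hz : IsUnit (1 - z ^ 2)) :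
    mainTerm x y z + ((1 + x) * ((1 + y) * (1 + z)))⁻¹ʳ =
      2 * ((1 + x * y + x * z + y * z) *
        ((1 - x ^ 2)⁻¹ʳ * (1 - y ^ 2)⁻¹ʳ * (1 - z ^ 2)⁻¹ʳ)) := by
  simp only [mainTerm, Ring.mul_inverse_rev, ringInverse_one_sub, ringInverse_one_add, hx, hy, hz]
  ring

theorem four_dvd_cyclotomic_expansion (x y z d₀ d₁ d₂ n₀ n₁ n₂ : R) :
    4 ∣ 3 * ((1 + x * y + x * z + y * z) * (d₀ * d₁ * d₂)) +
      (1 - x + y + z + x * y + x * z - y * z + x * y * z) *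
        ((d₀ - 2 * n₀) * (d₁ - 2 * n₁) * (d₂ - 2 * n₂)) +
      ((x * d₀ + 2 * (1 - x) * n₀) * ((1 - y) * d₁) * ((1 - z) * d₂) -
        (y * d₁ + 2 * (1 - y) * n₁) * ((1 - x) * d₀) * ((1 - z) * d₂) -
        (z * d₂ + 2 * (1 - z) * n₂) * ((1 - x) * d₀) * ((1 - y) * d₁)) := by
  -- The quotient, sorted by degree in the `nᵢ`.
  refine ⟨(1 + x * y + x * z + y * z) * (d₀ * d₁ * d₂) -
    ((y + z - y * z + x * y * z) * (n₀ * d₁ * d₂ + d₀ * n₁ * d₂ + d₀ * d₁ * n₂) +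
      (1 - x) * (1 - y) * (1 - z) * (d₀ * n₁ * d₂ + d₀ * d₁ * n₂)) +
    (1 - x + y + z + x * y + x * z - y * z + x * y * z) *
      (d₀ * n₁ * n₂ + n₀ * d₁ * n₂ + n₀ * n₁ * d₂ - 2 * (n₀ * n₁ * n₂)), ?_⟩
  ring

theorem eight_dvd_mainTerm_add_orderTwoTerm_add_orderFourTerm (hx : IsUnit (1 - x ^ 4))
    (hy : IsUnit (1 - y ^ 4)) (hz : IsUnit (1 - z ^ 4)) :
    8 ∣ 3 * mainTerm x y z + orderTwoTerm x y z + 2 * orderFourTerm x y z := by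
  have isUnit_one_sub_sq {t : R} (ht : IsUnit (1 - t ^ 4)) : IsUnit (1 - t ^ 2) :=
    isUnit_of_dvd_unit ⟨1 + t ^ 2, by ring⟩ ht
  obtain ⟨k, hk⟩ := four_dvd_cyclotomic_expansion x y z
    (1 - x ^ 2)⁻¹ʳ (1 - y ^ 2)⁻¹ʳ (1 - z ^ 2)⁻¹ʳ
    (x ^ 2 * (1 - x ^ 4)⁻¹ʳ) (y ^ 2 * (1 - y ^ 4)⁻¹ʳ) (z ^ 2 * (1 - z ^ 4)⁻¹ʳ)
  rw [← ringInverse_one_add_sq hx, ← ringInverse_one_add_sq hy, ← ringInverse_one_add_sq hz,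
    ← ringInverse_one_add (isUnit_one_sub_sq hx), ← ringInverse_one_add (isUnit_one_sub_sq hy),
    ← ringInverse_one_add (isUnit_one_sub_sq hz)] at hk
  have heven := mainTerm_add_prod_ringInverse_one_add (isUnit_one_sub_sq hx)
    (isUnit_one_sub_sq hy) (isUnit_one_sub_sq hz)
  refine ⟨k - (1 + x)⁻¹ʳ * (1 + y)⁻¹ʳ * (1 + z)⁻¹ʳ * (x ^ 2 * (1 - x ^ 4)⁻¹ʳ -
    y ^ 2 * (1 - y ^ 4)⁻¹ʳ - z ^ 2 * (1 - z ^ 4)⁻¹ʳ), ?_⟩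
  simp only [Ring.mul_inverse_rev] at heven
  simp only [orderTwoTerm, orderFourTerm, Ring.mul_inverse_rev]
  linear_combination 3 * heven + 2 * hk +
    2 * ((1 + y)⁻¹ʳ * (1 + z)⁻¹ʳ) * mul_sq_ringInverse_one_add hx -
    2 * ((1 + x)⁻¹ʳ * (1 + z)⁻¹ʳ) * mul_sq_ringInverse_one_add hy -
    2 * ((1 + x)⁻¹ʳ * (1 + y)⁻¹ʳ) * mul_sq_ringInverse_one_add hz

theorem twentyFour_dvd_mainTerm_add_orbifoldTerms (hx : IsUnit (1 - x ^ 12))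
    (hy : IsUnit (1 - y ^ 12)) (hz : IsUnit (1 - z ^ 12)) :
    24 ∣ mainTerm x y z + 3 * orderTwoTerm x y z + 6 * orderFourTerm x y z +
      8 * orderThreeTerm x y z := by
  have isUnit_one_sub_pow_three {t : R} (ht : IsUnit (1 - t ^ 12)) : IsUnit (1 - t ^ 3) :=
    isUnit_of_dvd_unit ⟨1 + t ^ 3 + t ^ 6 + t ^ 9, by ring⟩ ht
  have isUnit_one_sub_pow_four {t : R} (ht : IsUnit (1 - t ^ 12)) : IsUnit (1 - t ^ 4) :=
    isUnit_of_dvd_unit ⟨1 + t ^ 4 + t ^ 8, by ring⟩ ht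
  obtain ⟨k, hk⟩ := three_dvd_orderThreeTerm_sub_mainTerm (isUnit_one_sub_pow_three hx)
    (isUnit_one_sub_pow_three hy) (isUnit_one_sub_pow_three hz)
  obtain ⟨l, hl⟩ := eight_dvd_mainTerm_add_orderTwoTerm_add_orderFourTerm
    (isUnit_one_sub_pow_four hx) (isUnit_one_sub_pow_four hy) (isUnit_one_sub_pow_four hz)
  exact ⟨k + l, by linear_combination 8 * hk + 3 * hl⟩

end CommRing

section MvPowerSeries

variable {σ : Type*}

theorem mvPowerSeries_inv_eq_ringInverse {k : Type*} [Field k] (φ : MvPowerSeries σ k) :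
    φ⁻¹ = φ⁻¹ʳ := by
  by_cases h : constantCoeff φ = 0
  · rw [MvPowerSeries.inv_eq_zero.2 h, Ring.inverse_non_unit]
    simp [MvPowerSeries.isUnit_iff_constantCoeff, h]
  · rw [MvPowerSeries.inv_eq_iff_mul_eq_one h, Ring.inverse_mul_cancel]
    simp [MvPowerSeries.isUnit_iff_constantCoeff, h]

theorem map_ringInverse_eq_inv {R k : Type*} [Ring R] [Field k] (f : R →+* k)
    {φ : MvPowerSeries σ R} (hφ : IsUnit (constantCoeff φ)) :
    map f φ⁻¹ʳ = (map f φ)⁻¹ := by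
  rw [mvPowerSeries_inv_eq_ringInverse,
    map_ringInverse _ (MvPowerSeries.isUnit_iff_constantCoeff.2 hφ)]

theorem exists_int_coeff_eq_of_mem_range_map {S : Type*} [Ring S] {φ : MvPowerSeries σ S}
    (hφ : φ ∈ (map (σ := σ) (Int.castRingHom S)).range) (e : σ →₀ ℕ) :
    ∃ n : ℤ, coeff e φ = n := by
  obtain ⟨ψ, rfl⟩ := hφ
  exact ⟨coeff e ψ, coeff_map _ _ _⟩

theorem twentyFour_mul_sum_inv_eq {k : Type*} [Field k] [CharZero k]
    (a b c d l u v : MvPowerSeries σ k) :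
    24 * ((24 * a)⁻¹ + b * (C (3 / 8) + C (1 / 4) * l) + u * (4 * c)⁻¹ + v * (3 * d)⁻¹) =
      a⁻¹ + 3 * (b * (3 + 2 * l)) + 6 * (u * c⁻¹) + 8 * (v * d⁻¹) := by
  have natCast_mul_inv (n : ℕ) [NeZero n] :
      (n : MvPowerSeries σ k) * (n : MvPowerSeries σ k)⁻¹ = 1 :=
    MvPowerSeries.mul_inv_cancel _ (by simp [NeZero.ne])
  have h24 := natCast_mul_inv 24
  have h4 := natCast_mul_inv 4
  have h3 := natCast_mul_inv 3
  have h38 : 8 * C (σ := σ) (3 / 8 : k) = 3 := by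
    rw [← map_ofNat (C (σ := σ) (R := k)) 8, ← map_mul, mul_div_cancel₀ _ (by simp), map_ofNat]
  have h14 : 4 * C (σ := σ) (1 / 4 : k) = 1 := by
    rw [← map_ofNat (C (σ := σ) (R := k)) 4, ← map_mul, mul_div_cancel₀ _ (by simp), map_one]
  push_cast at h24 h4 h3
  simp only [MvPowerSeries.mul_inv_rev]
  linear_combination a⁻¹ * h24 + 3 * b * h38 + 6 * b * l * h14 + 6 * u * c⁻¹ * h4 + 8 * v * d⁻¹ * h3

end MvPowerSeries

/-- **Integrality of the genus-one 2-point generating function** (Proposition 3, `n = 2`):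
in `ℚ⟦q, q₁, q₂⟧` (with `q = X 0`, `q₁ = X 1`, `q₂ = X 2`), all coefficients of
`Φ₂ := (q₁q₂/((1−q₁)(1−q₂))) · [ 1/(24(1−q)(1−q₁)(1−q₂))
  + (1/((1+q)(1+q₁)(1+q₂)))(3/8 + (1/4)(q/(1+q) − q₁/(1+q₁) − q₂/(1+q₂)))
  + (1−q+q₁+q₂+qq₁+qq₂−q₁q₂+qq₁q₂)/(4(1+q²)(1+q₁²)(1+q₂²))
  + (1−q+2q₁+2q₂+qq₁+qq₂+q₁q₂−qq₁q₂)/(3(1+q+q²)(1+q₁+q₁²)(1+q₂+q₂²)) ]`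
are integers. -/
theorem integrality_two_points :
    ∀ e : Fin 3 →₀ ℕ, ∃ n : ℤ,
      MvPowerSeries.coeff (R := ℚ) e
        ((X 1 * X 2 * ((1 - X 1) * (1 - X 2))⁻¹) *
          ((24 * ((1 - X 0) * ((1 - X 1) * (1 - X 2))))⁻¹ +
            ((1 + X 0) * ((1 + X 1) * (1 + X 2)))⁻¹ *
              (C (σ := Fin 3) (R := ℚ) (3/8) + C (σ := Fin 3) (R := ℚ) (1/4) *
                (X 0 * (1 + X 0)⁻¹ - X 1 * (1 + X 1)⁻¹ - X 2 * (1 + X 2)⁻¹)) +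
            (1 - X 0 + X 1 + X 2 + X 0 * X 1 + X 0 * X 2 - X 1 * X 2 + X 0 * X 1 * X 2) *
              (4 * ((1 + X 0 ^ 2) * ((1 + X 1 ^ 2) * (1 + X 2 ^ 2))))⁻¹ +
            (1 - X 0 + 2 * X 1 + 2 * X 2 + X 0 * X 1 + X 0 * X 2 + X 1 * X 2
                - X 0 * X 1 * X 2) *
              (3 * ((1 + X 0 + X 0 ^ 2) * ((1 + X 1 + X 1 ^ 2) *
                (1 + X 2 + X 2 ^ 2))))⁻¹)) = (n : ℚ) := by
  have isUnit_one_sub_X_pow (i : Fin 3) : IsUnit (1 - X i ^ 12 : MvPowerSeries (Fin 3) ℤ) := by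
    simp [isUnit_iff_constantCoeff]
  obtain ⟨E, hE⟩ := twentyFour_dvd_mainTerm_add_orbifoldTerms (isUnit_one_sub_X_pow 0)
    (isUnit_one_sub_X_pow 1) (isUnit_one_sub_X_pow 2)
  have : CharZero (MvPowerSeries (Fin 3) ℚ) := algebraRat.charZero _
  have map_natLit (n : ℕ) [n.AtLeastTwo] :
      map (σ := Fin 3) (Int.castRingHom ℚ) ofNat(n) = ofNat(n) := map_ofNat _ _
  refine exists_int_coeff_eq_of_mem_range_map (mul_mem
    ⟨X 1 * X 2 * ((1 - X 1) * (1 - X 2))⁻¹ʳ, by simp [map_ringInverse_eq_inv]⟩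
    ⟨E, mul_left_cancel₀ (OfNat.ofNat_ne_zero 24) ?_⟩)
  rw [twentyFour_mul_sum_inv_eq, ← map_natLit 24, ← map_mul, ← hE]
  simp [mainTerm, orderTwoTerm, orderThreeTerm, orderFourTerm, map_ringInverse_eq_inv, map_natLit]
end

section
/- In the ring of formal power series over ℚ in the variables q, q₁, q₂, q₃, the series Φ₃ := (∏_{i=1}^{3} q_i/(1−q_i)) · [ 2/(24(1−q)∏_{i=1}^{3}(1−q_i)) + (1/((1+q)∏_{i=1}^{3}(1+q_i))) · ( −3/4 + (1/2)( q/(1+q) − ∑_{i=1}^{3} q_i/(1+q_i) ) ) + (1/(3(1+q+q²)∏_{i=1}^{3}(1+q_i+q_i²))) · ( −1 + q − (2+q)(q₁+q₂+q₃) − (1+2q)(q₁q₂+q₂q₃+q₃q₁) + (1−q) q₁q₂q₃ ) ] has all of its coefficients in ℤ. (This is the integrality, asserted in the paper, of the generating function of Proposition 3 for n = 3: the sum of the main contribution and the orbifold contribution Σ₃ computes integer Euler characteristics on M̄_{1,3}.) -/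
open MvPowerSeries

/-!
The bracket of `Φ₃` is `N / 12`, where `N` is built from integral power series, so it suffices that
`12 ∣ N`; the congruences modulo `4` and modulo `3` are separate.

Modulo `4`, `1/(1-x) = (1/(1+x)) (1 + 2x/(1-x))` and `1/(1-x) ≡ 1/(1+x)` modulo `2`, whence
`∏ 1/(1-xᵢ) ≡ ∏ 1/(1+xᵢ) · (1 + 2 ∑ xᵢ/(1+xᵢ))`, which cancels the contribution of order two.

Modulo `3`, `1 + x + x² ≡ (1-x)²`, whence `∏ 1/(1-xᵢ) ≡ ∏ (1-xᵢ)/(1+xᵢ+xᵢ²)`, and the polynomial in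
the contribution of order three is `-∏ (1-xᵢ)` modulo `3`.
-/

open scoped Ring

section Congruences

variable {ι R : Type*} [CommRing R]

theorem sq_dvd_prod_one_add_mul_sub (t : R) (s : Finset ι) (v : ι → R) :
    t ^ 2 ∣ ∏ i ∈ s, (1 + t * v i) - (1 + t * ∑ i ∈ s, v i) := by
  classical
  induction s using Finset.induction_on with
  | empty => simp
  | insert j s hj ih =>
    obtain ⟨w, hw⟩ := ih
    rw [Finset.prod_insert hj, Finset.sum_insert hj]
    exact ⟨(1 + t * v j) * w + v j * ∑ i ∈ s, v i, by linear_combination (1 + t * v j) * hw⟩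

theorem inverse_one_sub_eq_inverse_one_add_mul {x : R} (hsub : IsUnit (1 - x))
    (hadd : IsUnit (1 + x)) :
    (1 - x)⁻¹ʳ = (1 + x)⁻¹ʳ * (1 + 2 * (x * (1 - x)⁻¹ʳ)) := by
  linear_combination (1 + x)⁻¹ʳ * Ring.mul_inverse_cancel _ hsub
    - (1 - x)⁻¹ʳ * Ring.mul_inverse_cancel _ hadd

theorem four_dvd_prod_inverse_one_sub_sub (s : Finset ι) {x : ι → R}
    (hsub : ∀ i ∈ s, IsUnit (1 - x i)) (hadd : ∀ i ∈ s, IsUnit (1 + x i)) :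
    4 ∣ ∏ i ∈ s, (1 - x i)⁻¹ʳ -
      (∏ i ∈ s, (1 + x i)⁻¹ʳ) * (1 + 2 * ∑ i ∈ s, x i * (1 + x i)⁻¹ʳ) := by
  have hprod : ∏ i ∈ s, (1 - x i)⁻¹ʳ =
      (∏ i ∈ s, (1 + x i)⁻¹ʳ) * ∏ i ∈ s, (1 + 2 * (x i * (1 - x i)⁻¹ʳ)) := by
    rw [← Finset.prod_mul_distrib]
    exact Finset.prod_congr rfl fun i hi ↦
      inverse_one_sub_eq_inverse_one_add_mul (hsub i hi) (hadd i hi)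
  have hsum : 2 ∣ ∑ i ∈ s, x i * (1 - x i)⁻¹ʳ - ∑ i ∈ s, x i * (1 + x i)⁻¹ʳ := by
    rw [← Finset.sum_sub_distrib]
    refine Finset.dvd_sum fun i hi ↦ ⟨x i * ((1 + x i)⁻¹ʳ * (x i * (1 - x i)⁻¹ʳ)), ?_⟩
    linear_combination x i * inverse_one_sub_eq_inverse_one_add_mul (hsub i hi) (hadd i hi)
  obtain ⟨u, hu⟩ := sq_dvd_prod_one_add_mul_sub 2 s fun i ↦ x i * (1 - x i)⁻¹ʳ
  obtain ⟨v, hv⟩ := hsum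
  refine ⟨(∏ i ∈ s, (1 + x i)⁻¹ʳ) * (u + v), ?_⟩
  rw [hprod]
  linear_combination (∏ i ∈ s, (1 + x i)⁻¹ʳ) * (hu + 2 * hv)

theorem three_dvd_inverse_one_sub_sub {x : R} (hsub : IsUnit (1 - x))
    (hcyc : IsUnit (1 + x + x ^ 2)) :
    3 ∣ (1 - x)⁻¹ʳ - (1 - x) * (1 + x + x ^ 2)⁻¹ʳ := by
  have ha := Ring.mul_inverse_cancel _ hsub
  have hc := Ring.mul_inverse_cancel _ hcyc
  refine ⟨x * (1 - x)⁻¹ʳ * (1 + x + x ^ 2)⁻¹ʳ, ?_⟩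
  -- `1 + x + x² = (1 - x)² + 3x`
  linear_combination (1 - x) * (1 + x + x ^ 2)⁻¹ʳ * ha - (1 - x)⁻¹ʳ * hc

theorem three_dvd_prod_inverse_one_sub_sub (s : Finset ι) {x : ι → R}
    (hsub : ∀ i ∈ s, IsUnit (1 - x i)) (hcyc : ∀ i ∈ s, IsUnit (1 + x i + x i ^ 2)) :
    3 ∣ ∏ i ∈ s, (1 - x i)⁻¹ʳ - (∏ i ∈ s, (1 - x i)) * ∏ i ∈ s, (1 + x i + x i ^ 2)⁻¹ʳ := by
  rw [← Finset.prod_mul_distrib, ← Ideal.mem_span_singleton, ← SModEq.sub_mem]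
  refine SModEq.prod fun i hi ↦ ?_
  rw [SModEq.sub_mem, Ideal.mem_span_singleton]
  exact three_dvd_inverse_one_sub_sub (hsub i hi) (hcyc i hi)

end Congruences

section Numerator

variable {R S : Type*} [CommRing R] [CommRing S]

/-- The polynomial in the contribution of order three to `Φ₃`, with `q = x 0` and `qᵢ = x i`. -/
def orderThreePolynomial (x : Fin 4 → R) : R :=
  -1 + x 0 - (2 + x 0) * (x 1 + x 2 + x 3)
    - (1 + 2 * x 0) * (x 1 * x 2 + x 2 * x 3 + x 3 * x 1)
    + (1 - x 0) * (x 1 * x 2 * x 3)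

theorem orderThreePolynomial_eq_neg_prod_one_sub_sub (x : Fin 4 → R) :
    orderThreePolynomial x = -∏ i, (1 - x i) -
      3 * (x 1 + x 2 + x 3 + x 0 * (x 1 * x 2 + x 2 * x 3 + x 3 * x 1)) := by
  rw [orderThreePolynomial, Fin.prod_univ_four]
  ring

/-- Twelve times the bracket in `Φ₃`, with `q = x 0` and `qᵢ = x i`; once `12` is cleared,
the only denominators left are the `1 - xᵢ`, `1 + xᵢ` and `1 + xᵢ + xᵢ²`, so that it lives in any
commutative ring where these are units. -/
noncomputable def threePointNumerator (x : Fin 4 → R) : R :=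
  ∏ i, (1 - x i)⁻¹ʳ +
    (∏ i, (1 + x i)⁻¹ʳ) * (-9 + 6 * (x 0 * (1 + x 0)⁻¹ʳ -
      (x 1 * (1 + x 1)⁻¹ʳ + x 2 * (1 + x 2)⁻¹ʳ + x 3 * (1 + x 3)⁻¹ʳ))) +
    4 * (∏ i, (1 + x i + x i ^ 2)⁻¹ʳ) * orderThreePolynomial x

theorem four_dvd_threePointNumerator {x : Fin 4 → R} (hsub : ∀ i, IsUnit (1 - x i))
    (hadd : ∀ i, IsUnit (1 + x i)) : 4 ∣ threePointNumerator x := by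
  obtain ⟨w, hw⟩ := four_dvd_prod_inverse_one_sub_sub Finset.univ
    (fun i _ ↦ hsub i) fun i _ ↦ hadd i
  rw [Fin.sum_univ_four] at hw
  rw [threePointNumerator]
  refine ⟨w + (∏ i, (1 + x i)⁻¹ʳ) * (-2 + 2 * (x 0 * (1 + x 0)⁻¹ʳ) -
    (x 1 * (1 + x 1)⁻¹ʳ + x 2 * (1 + x 2)⁻¹ʳ + x 3 * (1 + x 3)⁻¹ʳ)) +
    (∏ i, (1 + x i + x i ^ 2)⁻¹ʳ) * orderThreePolynomial x, ?_⟩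
  linear_combination hw

theorem three_dvd_threePointNumerator {x : Fin 4 → R} (hsub : ∀ i, IsUnit (1 - x i))
    (hcyc : ∀ i, IsUnit (1 + x i + x i ^ 2)) : 3 ∣ threePointNumerator x := by
  obtain ⟨w, hw⟩ := three_dvd_prod_inverse_one_sub_sub Finset.univ
    (fun i _ ↦ hsub i) fun i _ ↦ hcyc i
  rw [threePointNumerator, orderThreePolynomial_eq_neg_prod_one_sub_sub]
  refine ⟨w + (∏ i, (1 + x i)⁻¹ʳ) * (-3 + 2 * (x 0 * (1 + x 0)⁻¹ʳ -
    (x 1 * (1 + x 1)⁻¹ʳ + x 2 * (1 + x 2)⁻¹ʳ + x 3 * (1 + x 3)⁻¹ʳ))) -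
    (∏ i, (1 + x i + x i ^ 2)⁻¹ʳ) * (∏ i, (1 - x i) +
      4 * (x 1 + x 2 + x 3 + x 0 * (x 1 * x 2 + x 2 * x 3 + x 3 * x 1))), ?_⟩
  linear_combination hw

theorem twelve_dvd_threePointNumerator {x : Fin 4 → R} (hsub : ∀ i, IsUnit (1 - x i))
    (hadd : ∀ i, IsUnit (1 + x i)) (hcyc : ∀ i, IsUnit (1 + x i + x i ^ 2)) :
    12 ∣ threePointNumerator x := by
  have hcoprime : IsCoprime (4 : R) 3 := ⟨1, -1, by norm_num⟩
  have h12 : (12 : R) = 4 * 3 := by norm_num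
  rw [h12]
  exact hcoprime.mul_dvd (four_dvd_threePointNumerator hsub hadd)
    (three_dvd_threePointNumerator hsub hcyc)

theorem map_threePointNumerator (f : R →+* S) {x : Fin 4 → R} (hsub : ∀ i, IsUnit (1 - x i))
    (hadd : ∀ i, IsUnit (1 + x i)) (hcyc : ∀ i, IsUnit (1 + x i + x i ^ 2)) :
    f (threePointNumerator x) = threePointNumerator fun i ↦ f (x i) := by
  simp [threePointNumerator, orderThreePolynomial, map_ofNat, map_ringInverse, hsub, hadd, hcyc]

end Numerator

section PowerSeries

variable {σ R K : Type*} [CommRing R] [Field K]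

theorem inv_eq_ringInverse (f : MvPowerSeries σ K) : f⁻¹ = f⁻¹ʳ := by
  by_cases hf : constantCoeff f = 0
  · rw [MvPowerSeries.inv_eq_zero.mpr hf, Ring.inverse_non_unit]
    simp [isUnit_iff_constantCoeff, hf]
  · rw [MvPowerSeries.inv_eq_iff_mul_eq_one hf, Ring.inverse_mul_cancel]
    simp [isUnit_iff_constantCoeff, hf]

/-- The series `Φ₃` with power series substituted for its variables: `q = x 0` and `qᵢ = x i`. -/
noncomputable def threePointSeries (x : Fin 4 → MvPowerSeries σ K) : MvPowerSeries σ K :=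
  (x 1 * (1 - x 1)⁻¹ * (x 2 * (1 - x 2)⁻¹) * (x 3 * (1 - x 3)⁻¹)) *
    (2 * (24 * ((1 - x 0) * ((1 - x 1) * ((1 - x 2) * (1 - x 3)))))⁻¹ +
      ((1 + x 0) * ((1 + x 1) * ((1 + x 2) * (1 + x 3))))⁻¹ *
        (C (-3/4) + C (1/2) *
          (x 0 * (1 + x 0)⁻¹ -
            (x 1 * (1 + x 1)⁻¹ + x 2 * (1 + x 2)⁻¹ + x 3 * (1 + x 3)⁻¹))) +
      (3 * ((1 + x 0 + x 0 ^ 2) * ((1 + x 1 + x 1 ^ 2) *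
          ((1 + x 2 + x 2 ^ 2) * (1 + x 3 + x 3 ^ 2)))))⁻¹ *
        orderThreePolynomial x)

theorem threePointSeries_eq_mul_threePointNumerator (h12 : (12 : K) ≠ 0)
    (x : Fin 4 → MvPowerSeries σ K) :
    threePointSeries x =
      x 1 * (1 - x 1)⁻¹ʳ * (x 2 * (1 - x 2)⁻¹ʳ) * (x 3 * (1 - x 3)⁻¹ʳ) *
        (C (1 / 12) * threePointNumerator x) := by
  have hC {r n : K} (h : 12 * r = n) : (C r : MvPowerSeries σ K) = C (1 / 12) * C n := by
    rw [← map_mul, ← h, ← mul_assoc, one_div_mul_cancel h12, one_mul]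
  have h2 : (2 : K) ≠ 0 := fun h ↦ h12 (by linear_combination 6 * h)
  have h3 : (3 : K) ≠ 0 := fun h ↦ h12 (by linear_combination 4 * h)
  have h4 : (4 : K) ≠ 0 := fun h ↦ h12 (by linear_combination 3 * h)
  have h24 : (24 : K) = 12 * 2 := by norm_num
  have hmain : 2 * (24 : MvPowerSeries σ K)⁻¹ = C (1 / 12) := by
    rw [← map_ofNat C 24, ← map_ofNat C 2, C_inv, ← map_mul, h24]
    congr 1
    field_simp
  have hthird : (3 : MvPowerSeries σ K)⁻¹ = C (1 / 12) * C 4 := by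
    rw [← map_ofNat C 3, C_inv, hC (n := 4) (by field_simp; norm_num)]
  have hquarters : (C (-3 / 4) : MvPowerSeries σ K) = C (1 / 12) * C (-9) :=
    hC (by field_simp; norm_num)
  have hhalf : (C (1 / 2) : MvPowerSeries σ K) = C (1 / 12) * C 6 :=
    hC (by field_simp; norm_num)
  simp only [threePointSeries, threePointNumerator, MvPowerSeries.mul_inv_rev, hthird, hquarters,
    hhalf, Fin.prod_univ_four, ← inv_eq_ringInverse, ← hmain, map_neg, map_ofNat]
  ring

theorem integrality_three_points_general (φ : R →+* K) (h12 : (12 : K) ≠ 0)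
    {y : Fin 4 → MvPowerSeries σ R} (hy : ∀ i, constantCoeff (y i) = 0) :
    threePointSeries (fun i ↦ map φ (y i)) ∈ (map (σ := σ) φ).range := by
  have hsub (i) : IsUnit (1 - y i) := by simp [isUnit_iff_constantCoeff, hy]
  have hadd (i) : IsUnit (1 + y i) := by simp [isUnit_iff_constantCoeff, hy]
  have hcyc (i) : IsUnit (1 + y i + y i ^ 2) := by simp [isUnit_iff_constantCoeff, hy]
  obtain ⟨w, hw⟩ := twelve_dvd_threePointNumerator hsub hadd hcyc
  have hbracket : C (1 / 12) * threePointNumerator (fun i ↦ map φ (y i)) = map φ w := by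
    rw [← map_threePointNumerator _ hsub hadd hcyc, hw, map_mul, map_ofNat, ← mul_assoc,
      ← map_ofNat C 12, ← map_mul, one_div_mul_cancel h12, map_one, one_mul]
  refine ⟨y 1 * (1 - y 1)⁻¹ʳ * (y 2 * (1 - y 2)⁻¹ʳ) * (y 3 * (1 - y 3)⁻¹ʳ) * w, ?_⟩
  rw [threePointSeries_eq_mul_threePointNumerator h12, hbracket]
  simp [map_ringInverse, hsub]

end PowerSeries

/-- **Integrality of the genus-one 3-point generating function** (Proposition 3, `n = 3`):
in `ℚ⟦q, q₁, q₂, q₃⟧` (with `q = X 0`, `qᵢ = X i`), all coefficients of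
`Φ₃ := (∏ᵢ qᵢ/(1−qᵢ)) · [ 2/(24(1−q)∏ᵢ(1−qᵢ))
  + (1/((1+q)∏ᵢ(1+qᵢ)))(−3/4 + (1/2)(q/(1+q) − ∑ᵢ qᵢ/(1+qᵢ)))
  + (1/(3(1+q+q²)∏ᵢ(1+qᵢ+qᵢ²)))(−1 + q − (2+q)(q₁+q₂+q₃)
      − (1+2q)(q₁q₂+q₂q₃+q₃q₁) + (1−q)q₁q₂q₃) ]`
are integers. -/
theorem integrality_three_points :
    ∀ e : Fin 4 →₀ ℕ, ∃ n : ℤ,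
      MvPowerSeries.coeff (R := ℚ) e
        ((X 1 * (1 - X 1)⁻¹ * (X 2 * (1 - X 2)⁻¹) * (X 3 * (1 - X 3)⁻¹)) *
          (2 * (24 * ((1 - X 0) * ((1 - X 1) * ((1 - X 2) * (1 - X 3)))))⁻¹ +
            ((1 + X 0) * ((1 + X 1) * ((1 + X 2) * (1 + X 3))))⁻¹ *
              (C (σ := Fin 4) (R := ℚ) (-3/4) + C (σ := Fin 4) (R := ℚ) (1/2) *
                (X 0 * (1 + X 0)⁻¹ -
                  (X 1 * (1 + X 1)⁻¹ + X 2 * (1 + X 2)⁻¹ + X 3 * (1 + X 3)⁻¹))) +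
            (3 * ((1 + X 0 + X 0 ^ 2) * ((1 + X 1 + X 1 ^ 2) *
                ((1 + X 2 + X 2 ^ 2) * (1 + X 3 + X 3 ^ 2)))))⁻¹ *
              (-1 + X 0 - (2 + X 0) * (X 1 + X 2 + X 3)
                - (1 + 2 * X 0) * (X 1 * X 2 + X 2 * X 3 + X 3 * X 1)
                + (1 - X 0) * (X 1 * X 2 * X 3)))) = (n : ℚ) := by
  intro e
  obtain ⟨f, hf⟩ := integrality_three_points_general (Int.castRingHom ℚ) (by norm_num)
    (y := X) constantCoeff_X
  refine ⟨coeff e f, ?_⟩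
  simpa [threePointSeries, orderThreePolynomial] using (congrArg (coeff e) hf).symm
end

section
/- In the ring of formal power series over ℚ in the variables q, q₁, q₂, q₃, q₄, the series Φ₄ := (∏_{i=1}^{4} q_i/(1−q_i)) · [ 6/(24(1−q)∏_{i=1}^{4}(1−q_i)) + (1/((1+q)∏_{i=1}^{4}(1+q_i))) · ( 3/4 + (1/2)( q/(1+q) − ∑_{i=1}^{4} q_i/(1+q_i) ) ) ] has all of its coefficients in ℤ. (This is the integrality, asserted in the paper, of the generating function of Proposition 3 for n = 4: the sum of the main contribution and the orbifold contribution Σ₄ computes integer Euler characteristics on M̄_{1,4}.) -/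
open MvPowerSeries

/-!
Write `P = ∏ᵢ (1 - qᵢ)`, `Q = ∏ᵢ (1 + qᵢ)` and `S = ∑ᵢ qᵢ / (1 + qᵢ)`, where `i` runs over all the
variables, `q` included. Four times the bracket is `1 / P + (1 / Q) (3 + 2 (2 q / (1 + q) - S))`,
so the claim is that this series, whose coefficients are integers, vanishes modulo `4`. Since
`(1 - qᵢ) / (1 + qᵢ) = 1 - 2 qᵢ / (1 + qᵢ)` and products of two multiples of `2` vanish modulo `4`,
`P = Q (1 - 2 S)` and `1 / P = (1 / Q) (1 + 2 S)` modulo `4`, and the terms cancel.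
-/

theorem prod_one_add_mul_of_sq_eq_zero {ι R : Type*} [CommSemiring R] {c : R} (hc : c ^ 2 = 0)
    (s : Finset ι) (a : ι → R) :
    ∏ i ∈ s, (1 + c * a i) = 1 + c * ∑ i ∈ s, a i := by
  classical
  induction s using Finset.induction_on with
  | empty => simp
  | insert i s hi ih =>
    rw [Finset.prod_insert hi, Finset.sum_insert hi, ih]
    calc (1 + c * a i) * (1 + c * ∑ j ∈ s, a j)
        = 1 + c * (a i + ∑ j ∈ s, a j) + c ^ 2 * (a i * ∑ j ∈ s, a j) := by ring
      _ = 1 + c * (a i + ∑ j ∈ s, a j) := by rw [hc, zero_mul, add_zero]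

section CommRing

variable {ι R : Type*} [CommRing R]

theorem prod_one_sub_of_four_eq_zero (h4 : (4 : R) = 0) {s : Finset ι} {x v : ι → R}
    (hv : ∀ i ∈ s, (1 + x i) * v i = 1) :
    ∏ i ∈ s, (1 - x i) = (∏ i ∈ s, (1 + x i)) * (1 - 2 * ∑ i ∈ s, x i * v i) := by
  have hfactor : ∀ i ∈ s, 1 - x i = (1 + x i) * (1 + -2 * (x i * v i)) := fun i hi ↦ by
    linear_combination 2 * x i * hv i hi
  rw [Finset.prod_congr rfl hfactor, Finset.prod_mul_distrib,
    prod_one_add_mul_of_sq_eq_zero (by linear_combination h4), neg_mul, ← sub_eq_add_neg]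

theorem inv_prod_one_sub_of_four_eq_zero (h4 : (4 : R) = 0) {s : Finset ι} {x v : ι → R} {u w : R}
    (hv : ∀ i ∈ s, (1 + x i) * v i = 1) (hu : (∏ i ∈ s, (1 - x i)) * u = 1)
    (hw : (∏ i ∈ s, (1 + x i)) * w = 1) :
    u = w * (1 + 2 * ∑ i ∈ s, x i * v i) := by
  set S := ∑ i ∈ s, x i * v i
  have hinv : (∏ i ∈ s, (1 - x i)) * (w * (1 + 2 * S)) = 1 := by
    rw [prod_one_sub_of_four_eq_zero h4 hv]
    linear_combination (1 - 4 * S ^ 2) * hw - S ^ 2 * h4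
  exact left_inv_eq_right_inv ((mul_comm _ _).trans hu) hinv

theorem four_dvd_inv_prod_one_sub_add {n : ℕ} {x v : Fin (n + 1) → R} {u w : R}
    (hv : ∀ i, (1 + x i) * v i = 1) (hu : (∏ i, (1 - x i)) * u = 1)
    (hw : (∏ i, (1 + x i)) * w = 1) :
    4 ∣ u + w * (3 + 2 * (x 0 * v 0 - ∑ i : Fin n, x i.succ * v i.succ)) := by
  let π := Ideal.Quotient.mk (Ideal.span {(4 : R)})
  have h4 : (4 : R ⧸ Ideal.span {(4 : R)}) = 0 := by
    exact_mod_cast (Ideal.Quotient.eq_zero_iff_dvd (4 : R) 4).2 dvd_rfl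
  have hinv : π u = π w * (1 + 2 * ∑ i, π (x i) * π (v i)) :=
    inv_prod_one_sub_of_four_eq_zero h4 (fun i _ ↦ by simpa using congrArg π (hv i))
      (by simpa using congrArg π hu) (by simpa using congrArg π hw)
  rw [← Ideal.Quotient.eq_zero_iff_dvd]
  change π _ = 0
  rw [Fin.sum_univ_succ] at hinv
  simp only [map_add, map_sub, map_mul, map_sum, map_ofNat, hinv]
  linear_combination (π w * (1 + π (x 0) * π (v 0))) * h4

end CommRing

theorem map_invOfUnit_eq_inv {σ R k : Type*} [Ring R] [Field k] (φ : R →+* k)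
    {f : MvPowerSeries σ R} {a : Rˣ} (hf : constantCoeff f = a) :
    map φ (invOfUnit f a) = (map φ f)⁻¹ := by
  have hne : constantCoeff (map φ f) ≠ 0 := by
    simpa [hf] using (a.isUnit.map φ).ne_zero
  rw [MvPowerSeries.eq_inv_iff_mul_eq_one hne, ← map_mul, invOfUnit_mul f a hf, map_one]

/-- The series over `ℚ` with integer coefficients, encoded as the image of the series over `ℤ`. -/
noncomputable def integralSeries (σ : Type*) : Subring (MvPowerSeries σ ℚ) :=
  (map (Int.castRingHom ℚ)).range

section Integral

variable {σ : Type*}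

theorem exists_coeff_eq_intCast {f : MvPowerSeries σ ℚ} (hf : f ∈ integralSeries σ)
    (e : σ →₀ ℕ) : ∃ m : ℤ, coeff e f = m := by
  obtain ⟨g, rfl⟩ := hf
  exact ⟨coeff e g, by simp⟩

theorem X_mul_inv_one_sub_X_mem_integralSeries (i : σ) : X i * (1 - X i)⁻¹ ∈ integralSeries σ :=
  ⟨X i * invOfUnit (1 - X i) 1, by simp [map_invOfUnit_eq_inv]⟩

theorem bracket_eq_C_mul (p v a : MvPowerSeries σ ℚ) :
    6 * (24 * p)⁻¹ + v * (C (3 / 4) + C (1 / 2) * a) = C (1 / 4) * (p⁻¹ + v * (3 + 2 * a)) := by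
  have h24 : 6 * (24 : MvPowerSeries σ ℚ)⁻¹ = C (1 / 4) := by
    rw [← map_ofNat C 24, ← map_ofNat C 6, C_inv, ← map_mul]
    norm_num
  have h34 : C (3 / 4) = (C (1 / 4) * 3 : MvPowerSeries σ ℚ) := by
    rw [← map_ofNat C 3, ← map_mul]
    norm_num
  have h12 : C (1 / 2) = (C (1 / 4) * 2 : MvPowerSeries σ ℚ) := by
    rw [← map_ofNat C 2, ← map_mul]
    norm_num
  rw [MvPowerSeries.mul_inv_rev, h34, h12]
  linear_combination p⁻¹ * h24

theorem bracket_mem_integralSeries (n : ℕ) :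
    6 * (24 * ∏ i : Fin (n + 1), (1 - X i))⁻¹ +
      (∏ i : Fin (n + 1), (1 + X i))⁻¹ *
        (C (3 / 4) + C (1 / 2) *
          (X 0 * (1 + X 0)⁻¹ - ∑ i : Fin n, X i.succ * (1 + X i.succ)⁻¹)) ∈
      integralSeries (Fin (n + 1)) := by
  obtain ⟨g, hg⟩ := four_dvd_inv_prod_one_sub_add (R := MvPowerSeries (Fin (n + 1)) ℤ)
    (x := X) (v := fun i ↦ invOfUnit (1 + X i) 1)
    (fun i ↦ mul_invOfUnit _ 1 (by simp))
    (mul_invOfUnit (∏ i, (1 - X i)) 1 (by simp))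
    (mul_invOfUnit (∏ i, (1 + X i)) 1 (by simp))
  refine ⟨g, ?_⟩
  have hgℚ := congrArg (map (Int.castRingHom ℚ)) hg
  simp only [map_add, map_sub, map_mul, map_sum, map_ofNat, map_X, map_one, map_prod,
    constantCoeff_X, Units.val_one, sub_zero, add_zero, Finset.prod_const_one,
    map_invOfUnit_eq_inv] at hgℚ
  rw [bracket_eq_C_mul, hgℚ, ← mul_assoc, ← map_ofNat C 4, ← map_mul]
  norm_num

end Integral

theorem integrality_four_points_general (n : ℕ) (e : Fin (n + 1) →₀ ℕ) :
    ∃ m : ℤ,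
      coeff (R := ℚ) e
        ((∏ i : Fin n, X i.succ * (1 - X i.succ)⁻¹) *
          (6 * (24 * ∏ i : Fin (n + 1), (1 - X i))⁻¹ +
            (∏ i : Fin (n + 1), (1 + X i))⁻¹ *
              (C (3 / 4) + C (1 / 2) *
                (X 0 * (1 + X 0)⁻¹ - ∑ i : Fin n, X i.succ * (1 + X i.succ)⁻¹)))) = m :=
  exists_coeff_eq_intCast
    (mul_mem (prod_mem fun i _ ↦ X_mul_inv_one_sub_X_mem_integralSeries i.succ)
      (bracket_mem_integralSeries n)) e

/-- **Integrality of the genus-one 4-point generating function** (Proposition 3, `n = 4`):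
in `ℚ⟦q, q₁, q₂, q₃, q₄⟧` (with `q = X 0`, `qᵢ = X i`), all coefficients of
`Φ₄ := (∏ᵢ qᵢ/(1−qᵢ)) · [ 6/(24(1−q)∏ᵢ(1−qᵢ))
  + (1/((1+q)∏ᵢ(1+qᵢ)))(3/4 + (1/2)(q/(1+q) − ∑ᵢ qᵢ/(1+qᵢ))) ]`
are integers. -/
theorem integrality_four_points :
    ∀ e : Fin 5 →₀ ℕ, ∃ n : ℤ,
      MvPowerSeries.coeff (R := ℚ) e
        ((X 1 * (1 - X 1)⁻¹ * (X 2 * (1 - X 2)⁻¹) * (X 3 * (1 - X 3)⁻¹) *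
            (X 4 * (1 - X 4)⁻¹)) *
          (6 * (24 * ((1 - X 0) * ((1 - X 1) * ((1 - X 2) * ((1 - X 3) * (1 - X 4))))))⁻¹ +
            ((1 + X 0) * ((1 + X 1) * ((1 + X 2) * ((1 + X 3) * (1 + X 4)))))⁻¹ *
              (C (σ := Fin 5) (R := ℚ) (3/4) + C (σ := Fin 5) (R := ℚ) (1/2) *
                (X 0 * (1 + X 0)⁻¹ -
                  (X 1 * (1 + X 1)⁻¹ + X 2 * (1 + X 2)⁻¹ + X 3 * (1 + X 3)⁻¹ +
                    X 4 * (1 + X 4)⁻¹))))) = (n : ℚ) := by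
  intro e
  simpa [Fin.prod_univ_succ, Fin.sum_univ_succ, mul_assoc, add_assoc]
    using integrality_four_points_general 4 e
end
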